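/- Assume P does not lie on a median of ABC (a line joining a vertex to the midpoint of the opposite side). Then the generalized orthocenter H of P and the generalized orthocenter H′ of P′ both lie on the conic C_P through A, B, C, P, Q. -/

import Mathlib

noncomputable section

/-- The real affine plane. -/
abbrev Pt : Type := ℝ × ℝ

/-- `u` and `v` are parallel vectors (the zero vector is parallel to everything). -/
def Par (u v : Pt) : Prop := ∃ t : ℝ, u = t • v ∨ v = t • u

/-- The centroid of the triangle `ABC`. -/
def cent (A B C : Pt) : Pt := (3⁻¹ : ℝ) • (A + B + C)

/-- The homothety with center `Z` and ratio `r`. -/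
def homoth (Z : Pt) (r : ℝ) (X : Pt) : Pt := Z + r • (X - Z)

/-- The value at `p` of the quadratic polynomial with coefficient vector `c`. -/
def qval (c : Fin 6 → ℝ) (p : Pt) : ℝ :=
  c 0 * p.1 ^ 2 + c 1 * p.1 * p.2 + c 2 * p.2 ^ 2 + c 3 * p.1 + c 4 * p.2 + c 5

/-- `S` is a conic: the zero locus of a real polynomial of total degree 2. -/
def IsConic (S : Set Pt) : Prop :=
  ∃ c : Fin 6 → ℝ, ¬(c 0 = 0 ∧ c 1 = 0 ∧ c 2 = 0) ∧ S = {p | qval c p = 0}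

/-- `Z` is a center of symmetry of `S`. -/
def IsCenterOf (Z : Pt) (S : Set Pt) : Prop :=
  ∀ p ∈ S, (2 : ℝ) • Z - p ∈ S

/-- The gradient at `p` of the quadratic polynomial with coefficients `c`. -/
def qgrad (c : Fin 6 → ℝ) (p : Pt) : Pt :=
  (2 * c 0 * p.1 + c 1 * p.2 + c 3, c 1 * p.1 + 2 * c 2 * p.2 + c 4)

/-- The line through `X` and `Y`. -/
def lineThru (X Y : Pt) : Set Pt := {p | ∃ t : ℝ, p = X + t • (Y - X)}

/-- `L` is the tangent line at the nonsingular point `p` of the conic with coefficients `c`. -/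
def IsTangentLineAt (c : Fin 6 → ℝ) (L : Set Pt) (p : Pt) : Prop :=
  qval c p = 0 ∧ qgrad c p ≠ 0 ∧
  L = {q | (qgrad c p).1 * (q.1 - p.1) + (qgrad c p).2 * (q.2 - p.2) = 0}

/-!
Let `x` and `x'` be the normalized barycentric coordinates of `P` and `P'`, and write `σ'` for the
value of the Steiner form `x'₁x'₂ + x'₂x'₀ + x'₀x'₁`. Isotomic conjugation turns the circumconic
`α₀u₁u₂ + α₁u₂u₀ + α₂u₀u₁ = 0` into the line `α · u = 0`. So a circumconic passes through `P` and
`P'` exactly when `α · x' = α · x = 0`, and once it contains `P`, it contains `Q` if and only if it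
contains `P'`. The parallelism conditions say that the isotomic conjugate of `H` has coordinates
proportional to `x' - σ' x`; it lies on the line `PP'`, so `H` lies on every circumconic through
`P` and `P'`. This last condition is symmetric in `P` and `P'`, so `H'` lies there as well.
-/

section CollinearAndParallel

lemma sub_mul_sub_eq_of_collinear {k V X : Type*} [Field k] [AddCommGroup V] [Module k V]
    [AddTorsor V X] {p q r : X} (h : Collinear k {p, q, r}) (f g : X →ᵃ[k] k) :
    (f q - f p) * (g r - g p) = (f r - f p) * (g q - g p) := by
  obtain ⟨v, hv⟩ := (collinear_iff_of_mem (p₀ := p) (by simp)).mp h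
  obtain ⟨s, rfl⟩ := hv q (by simp)
  obtain ⟨t, rfl⟩ := hv r (by simp)
  simp only [AffineMap.map_vadd, map_smul, smul_eq_mul, vadd_eq_add]
  ring

lemma mul_apply_eq_of_par {u v : Pt} (h : Par u v) (f g : Pt →ₗ[ℝ] ℝ) :
    f u * g v = f v * g u := by
  obtain ⟨t, rfl | rfl⟩ := h <;> simp only [map_smul, smul_eq_mul] <;> ring

end CollinearAndParallel

section CyclicSums

lemma sum_eq_cyclic {M : Type*} [AddCommMonoid M] (f : Fin 3 → M) (i : Fin 3) :
    ∑ j, f j = f i + f (i + 1) + f (i + 2) := by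
  rw [← Equiv.sum_comp (Equiv.addLeft i) f, Fin.sum_univ_three]
  simp

variable {R : Type*} [CommRing R]

/-- The quadratic form whose zero locus is the circumconic with barycentric equation
`α₀u₁u₂ + α₁u₂u₀ + α₂u₀u₁ = 0`; indices are read modulo `3`. -/
def circumconicForm (α u : Fin 3 → R) : R := ∑ i, α i * (u (i + 1) * u (i + 2))

/-- The quadratic form of the Steiner circumellipse, the case `α = 1` of `circumconicForm`. -/
def steinerForm (u : Fin 3 → R) : R := ∑ i, u (i + 1) * u (i + 2)

lemma steinerForm_eq_cyclic (u : Fin 3 → R) (i : Fin 3) :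
    steinerForm u = u (i + 1) * u (i + 2) + u (i + 2) * u i + u i * u (i + 1) := by
  rw [steinerForm, sum_eq_cyclic _ i]
  simp [add_assoc]

lemma circumconicForm_smul (α u : Fin 3 → R) (r : R) :
    circumconicForm α (r • u) = r ^ 2 * circumconicForm α u := by
  simp only [circumconicForm, Pi.smul_apply, smul_eq_mul, Finset.mul_sum]
  exact Finset.sum_congr rfl fun i _ ↦ by ring

lemma circumconicForm_eq_zero_of_mul_eq_mul [IsDomain R] {α u q : Fin 3 → R} (hq : q ≠ 0)
    (huq : ∀ i, u (i + 1) * q (i + 1) = u (i + 2) * q (i + 2)) (hαq : ∑ i, α i * q i = 0) :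
    circumconicForm α u = 0 := by
  obtain ⟨i, hi⟩ := Function.ne_iff.mp hq
  refine (mul_eq_zero.mp ?_).resolve_left hi
  have h₁ : u (i + 2) * q (i + 2) = u i * q i := by simpa [add_assoc] using huq (i + 1)
  have h₂ : u i * q i = u (i + 1) * q (i + 1) := by simpa [add_assoc] using huq (i + 2)
  rw [sum_eq_cyclic _ i] at hαq
  rw [circumconicForm, sum_eq_cyclic _ i]
  simp only [add_assoc, Fin.reduceAdd, add_zero]
  linear_combination u (i + 1) * u (i + 2) * hαq - α (i + 2) * u (i + 1) * h₁
    + α (i + 1) * u (i + 2) * h₂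

lemma sq_sum_eq_sum_sq_add_steinerForm (u : Fin 3 → R) :
    (∑ i, u i) ^ 2 = ∑ i, u i ^ 2 + 2 * steinerForm u := by
  rw [steinerForm_eq_cyclic u 0, Fin.sum_univ_three, Fin.sum_univ_three]
  simp only [zero_add]
  ring

/-- Normalized barycentric coordinates of a pair of isotomic conjugate points off the side lines of
the reference triangle: `(1/x₀ : 1/x₁ : 1/x₂) = (x'₀ : x'₁ : x'₂)` means that `xᵢ x'ᵢ` does not
depend on `i`. -/
structure IsIsotomicPair (x x' : Fin 3 → R) : Prop where
  sum_eq_one : ∑ i, x i = 1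
  sum_eq_one' : ∑ i, x' i = 1
  mul_eq_mul (i j : Fin 3) : x i * x' i = x j * x' j
  mul_ne_zero (i : Fin 3) : x i * x' i ≠ 0

namespace IsIsotomicPair

variable {x x' α : Fin 3 → R}

lemma symm (h : IsIsotomicPair x x') : IsIsotomicPair x' x where
  sum_eq_one := h.sum_eq_one'
  sum_eq_one' := h.sum_eq_one
  mul_eq_mul i j := by simpa only [mul_comm] using h.mul_eq_mul i j
  mul_ne_zero i := by simpa only [mul_comm] using h.mul_ne_zero i

lemma steinerForm_mul_apply (h : IsIsotomicPair x x') (i : Fin 3) :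
    steinerForm x * x' i = x (i + 1) * x (i + 2) := by
  have hsum := h.sum_eq_one'
  rw [sum_eq_cyclic _ i] at hsum
  rw [steinerForm_eq_cyclic x i]
  linear_combination x (i + 1) * x (i + 2) * hsum + x (i + 2) * h.mul_eq_mul i (i + 1)
    + x (i + 1) * h.mul_eq_mul i (i + 2)

lemma circumconicForm_eq_steinerForm_mul_sum (h : IsIsotomicPair x x') (α : Fin 3 → R) :
    circumconicForm α x = steinerForm x * ∑ i, α i * x' i := by
  simp only [circumconicForm, ← h.steinerForm_mul_apply, Finset.mul_sum, mul_left_comm]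

lemma circumconicForm_one_sub (h : IsIsotomicPair x x') (α : Fin 3 → R) :
    circumconicForm α (1 - x') = ∑ i, α i * x' i + steinerForm x' * ∑ i, α i * x i := by
  rw [circumconicForm, Finset.mul_sum, ← Finset.sum_add_distrib]
  refine Finset.sum_congr rfl fun i _ ↦ ?_
  have hsum := h.sum_eq_one'
  rw [sum_eq_cyclic _ i] at hsum
  simp only [Pi.sub_apply, Pi.one_apply]
  linear_combination -α i * hsum - α i * h.symm.steinerForm_mul_apply i

lemma sub_steinerForm_smul_ne_zero [LinearOrder R] [IsStrictOrderedRing R]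
    (h : IsIsotomicPair x x') : x' - steinerForm x' • x ≠ 0 := by
  intro h₀
  have heq (i : Fin 3) : x' i = steinerForm x' * x i := sub_eq_zero.mp (congrFun h₀ i)
  have hone : steinerForm x' = 1 := by
    have hsum := h.sum_eq_one'
    rwa [Finset.sum_congr rfl fun i _ ↦ heq i, ← Finset.mul_sum, h.sum_eq_one, mul_one] at hsum
  have hsq := sq_sum_eq_sum_sq_add_steinerForm x'
  rw [h.sum_eq_one', hone] at hsq
  linarith [Finset.sum_nonneg fun i (_ : i ∈ Finset.univ) ↦ sq_nonneg (x' i)]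

variable [IsDomain R]

lemma steinerForm_ne_zero (h : IsIsotomicPair x x') : steinerForm x ≠ 0 := by
  intro h₀
  have := h.steinerForm_mul_apply 0
  rw [h₀, zero_mul] at this
  exact _root_.mul_ne_zero (left_ne_zero_of_mul (h.mul_ne_zero _))
    (left_ne_zero_of_mul (h.mul_ne_zero _)) this.symm

lemma circumconicForm_eq_zero_iff (h : IsIsotomicPair x x') :
    circumconicForm α x = 0 ↔ ∑ i, α i * x' i = 0 := by
  rw [h.circumconicForm_eq_steinerForm_mul_sum, mul_eq_zero, or_iff_right h.steinerForm_ne_zero]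

lemma circumconicForm_eq_zero_of_one_sub (h : IsIsotomicPair x x')
    (hx : circumconicForm α x = 0) (hsub : circumconicForm α (1 - x') = 0) :
    circumconicForm α x' = 0 := by
  rw [h.circumconicForm_one_sub, h.circumconicForm_eq_zero_iff.mp hx, zero_add,
    mul_eq_zero, or_iff_right h.symm.steinerForm_ne_zero] at hsub
  exact h.symm.circumconicForm_eq_zero_iff.mpr hsub

end IsIsotomicPair

lemma isIsotomicPair_div_of_sum_eq_one {k : Type*} [Field k] {x y z s : k}
    (hsum : x + y + z = 1) (hx : x ≠ 0) (hy : y ≠ 0) (hz : z ≠ 0)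
    (hs : s = x * y + y * z + z * x) (hs₀ : s ≠ 0) :
    IsIsotomicPair ![x, y, z] ![y * z / s, x * z / s, x * y / s] := by
  have hmul (i : Fin 3) :
      ![x, y, z] i * ![y * z / s, x * z / s, x * y / s] i = x * y * z / s := by
    fin_cases i <;> simp <;> ring
  refine ⟨by simpa [Fin.sum_univ_three] using hsum, ?_, fun i j ↦ by rw [hmul, hmul],
    fun i ↦ by rw [hmul]; positivity⟩
  simp only [Fin.sum_univ_three, Matrix.cons_val]
  field_simp
  rw [hs]
  ring

end CyclicSums

section Barycentric

lemma coords_sum_smul {ι k V : Type*} [Fintype ι] [Ring k] [AddCommGroup V]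
    [Module k V] (b : AffineBasis ι k V) {w : ι → k} (hw : ∑ i, w i = 1) :
    b.coords (∑ i, w i • b i) = w := by
  ext i
  rw [AffineBasis.coords_apply, ← Finset.affineCombination_eq_linear_combination _ _ _ hw,
    b.coord_apply_combination_of_mem (Finset.mem_univ i) hw]

lemma exists_affineBasis_of_affineIndependent {A B C : Pt} (h : AffineIndependent ℝ ![A, B, C]) :
    ∃ b : AffineBasis (Fin 3) ℝ Pt, b 0 = A ∧ b 1 = B ∧ b 2 = C :=
  ⟨⟨![A, B, C], h, h.affineSpan_eq_top_iff_card_eq_finrank_add_one.mpr (by simp)⟩, rfl, rfl, rfl⟩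

variable (b : AffineBasis (Fin 3) ℝ Pt)

lemma exists_circumconicForm_eq_qval {c : Fin 6 → ℝ} (hc : ∀ i, qval c (b i) = 0) :
    ∃ α : Fin 3 → ℝ, ∀ p, qval c p = circumconicForm α (b.coords p) := by
  let polar (X Y : Pt) : ℝ := 2 * c 0 * X.1 * Y.1 + c 1 * (X.1 * Y.2 + X.2 * Y.1)
    + 2 * c 2 * X.2 * Y.2 + c 3 * (X.1 + Y.1) + c 4 * (X.2 + Y.2) + 2 * c 5
  refine ⟨fun i ↦ polar (b (i + 1)) (b (i + 2)), fun p ↦ ?_⟩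
  have hsum := b.sum_coord_apply_eq_one p
  rw [Fin.sum_univ_three] at hsum
  rw [circumconicForm, sum_eq_cyclic _ 0]
  conv_lhs => rw [← b.linear_combination_coord_eq_self p, Fin.sum_univ_three]
  have h₀ := hc 0
  have h₁ := hc 1
  have h₂ := hc 2
  simp only [qval, polar, AffineBasis.coords_apply, Prod.fst_add, Prod.snd_add, Prod.smul_fst,
    Prod.smul_snd, smul_eq_mul, zero_add, Fin.reduceAdd] at *
  rw [← eq_sub_iff_add_eq'] at hsum
  rw [hsum]
  linear_combination b.coord 0 p ^ 2 * h₀ + b.coord 1 p ^ 2 * h₁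
    + (1 - (b.coord 0 p + b.coord 1 p)) ^ 2 * h₂

/-- The complement map of the reference triangle `b`, the homothety `K`; it sends the isotomic
conjugate `P'` of `P` to the isotomcomplement `Q` of `P`. -/
def complement (X : Pt) : Pt := homoth (cent (b 0) (b 1) (b 2)) (-(1 / 2)) X

lemma coords_complement (X : Pt) :
    b.coords (complement b X) = (1 / 2 : ℝ) • (1 - b.coords X) := by
  have hsum := b.sum_coord_apply_eq_one X
  rw [← coords_sum_smul b (w := (1 / 2 : ℝ) • (1 - b.coords X))]
  · congr 1
    conv_lhs => rw [← b.linear_combination_coord_eq_self X]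
    simp only [complement, homoth, cent, Fin.sum_univ_three, Pi.smul_apply, Pi.sub_apply,
      Pi.one_apply, AffineBasis.coords_apply, smul_eq_mul]
    module
  · rw [Fin.sum_univ_three] at hsum ⊢
    simp only [Pi.smul_apply, Pi.sub_apply, Pi.one_apply, AffineBasis.coords_apply, smul_eq_mul]
    linarith

/-- `D` is the trace of `P` on the side of the reference triangle `b` opposite to the vertex
`b i`. -/
structure IsTrace (i : Fin 3) (P D : Pt) : Prop where
  collinear_cevian : Collinear ℝ {b i, P, D}
  collinear_side : Collinear ℝ {b (i + 1), b (i + 2), D}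

/-- `H` is the generalized orthocenter of `P`, where `P'` is the isotomic conjugate of `P`: the line
joining each vertex to `H` is parallel to the line joining the isotomcomplement of `P` to the
corresponding trace of `P`. -/
def IsGeneralizedOrthocenter (P P' H : Pt) : Prop :=
  ∀ i, ∃ D, IsTrace b i P D ∧ Par (H - b i) (D - complement b P')

variable {b} {i : Fin 3} {P P' D H : Pt}

lemma IsTrace.coords_opposite_eq_zero (h : IsTrace b i P D) : b.coords D i = 0 := by
  have := sub_mul_sub_eq_of_collinear h.collinear_side (b.coord i) (b.coord (i + 2))
  simpa [b.coord_apply, eq_comm] using this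

lemma IsTrace.coords_mul_eq (h : IsTrace b i P D) :
    b.coords P (i + 1) * b.coords D (i + 2) = b.coords D (i + 1) * b.coords P (i + 2) := by
  have := sub_mul_sub_eq_of_collinear h.collinear_cevian (b.coord (i + 1)) (b.coord (i + 2))
  simpa [b.coord_apply] using this

lemma IsTrace.add_mul_coords (h : IsTrace b i P D) :
    (b.coords P (i + 1) + b.coords P (i + 2)) * b.coords D (i + 1) = b.coords P (i + 1) ∧
      (b.coords P (i + 1) + b.coords P (i + 2)) * b.coords D (i + 2) = b.coords P (i + 2) := by
  have hsum : b.coords D i + b.coords D (i + 1) + b.coords D (i + 2) = 1 :=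
    (sum_eq_cyclic _ i).symm.trans (b.sum_coord_apply_eq_one D)
  rw [h.coords_opposite_eq_zero, zero_add] at hsum
  constructor
  · linear_combination b.coords P (i + 1) * hsum - h.coords_mul_eq
  · linear_combination b.coords P (i + 2) * hsum + h.coords_mul_eq

lemma coords_mul_eq_coords_mul_of_par (h : Par (H - b i) (D - complement b P')) :
    b.coords H (i + 1) * (2 * b.coords D (i + 2) - (1 - b.coords P' (i + 2)))
      = b.coords H (i + 2) * (2 * b.coords D (i + 1) - (1 - b.coords P' (i + 1))) := by
  have hQ (j : Fin 3) : b.coord j (complement b P') = 1 / 2 * (1 - b.coords P' j) :=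
    congrFun (coords_complement b P') j
  have hpar := mul_apply_eq_of_par h (b.coord (i + 1)).linear (b.coord (i + 2)).linear
  simp only [← vsub_eq_sub, AffineMap.linearMap_vsub, hQ] at hpar
  simp only [b.coord_apply, add_eq_left, one_ne_zero, ↓reduceIte, vsub_eq_sub, sub_zero,
    AffineBasis.coords_apply, Fin.reduceEq] at hpar ⊢
  linear_combination 2 * hpar

lemma IsTrace.coords_orthocenter_mul_eq (hD : IsTrace b i P D)
    (hPP' : IsIsotomicPair (b.coords P) (b.coords P'))
    (hpar : Par (H - b i) (D - complement b P')) :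
    b.coords H (i + 1) * (b.coords P' - steinerForm (b.coords P') • b.coords P) (i + 1)
      = b.coords H (i + 2) *
        (b.coords P' - steinerForm (b.coords P') • b.coords P) (i + 2) := by
  obtain ⟨hD₁, hD₂⟩ := hD.add_mul_coords
  have hsum := (sum_eq_cyclic _ i).symm.trans hPP'.sum_eq_one'
  have hσ₁ := hPP'.symm.steinerForm_mul_apply (i + 1)
  have hσ₂ := hPP'.symm.steinerForm_mul_apply (i + 2)
  have hk := hPP'.mul_eq_mul (i + 1) (i + 2)
  have hH := coords_mul_eq_coords_mul_of_par hpar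
  refine mul_left_cancel₀ (hPP'.mul_ne_zero (i + 1)) ?_
  simp only [Pi.sub_apply, Pi.smul_apply, smul_eq_mul, add_assoc, Fin.reduceAdd, add_zero]
    at hσ₁ hσ₂ hsum ⊢
  generalize steinerForm (b.coords P') = σ, b.coords P (i + 1) = y, b.coords P (i + 2) = z,
    b.coords P' i = x', b.coords P' (i + 1) = y', b.coords P' (i + 2) = z',
    b.coords D (i + 1) = e, b.coords D (i + 2) = f,
    b.coords H (i + 1) = v, b.coords H (i + 2) = w at *
  have hf : (y + z) * y' * (2 * f - (1 - z')) = z * (y' - σ * y) := by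
    linear_combination 2 * y' * hD₂ + z * hσ₁ + y * y' * hsum - (y' + x') * hk
  have he : (y + z) * z' * (2 * e - (1 - y')) = y * (z' - σ * z) := by
    linear_combination 2 * z' * hD₁ + y * hσ₂ + z * z' * hsum + (z' + x') * hk
  linear_combination (y + z) * y' * z' * hH - v * z' * hf + w * y' * he + v * (y' - σ * y) * hk

lemma IsGeneralizedOrthocenter.circumconicForm_eq_zero {α : Fin 3 → ℝ}
    (hH : IsGeneralizedOrthocenter b P P' H) (hPP' : IsIsotomicPair (b.coords P) (b.coords P'))
    (hP : circumconicForm α (b.coords P) = 0) (hP' : circumconicForm α (b.coords P') = 0) :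
    circumconicForm α (b.coords H) = 0 := by
  refine circumconicForm_eq_zero_of_mul_eq_mul hPP'.sub_steinerForm_smul_ne_zero (fun i ↦ ?_) ?_
  · obtain ⟨D, hD, hpar⟩ := hH i
    exact hD.coords_orthocenter_mul_eq hPP' hpar
  · simp only [Pi.sub_apply, Pi.smul_apply, smul_eq_mul, mul_sub, Finset.sum_sub_distrib,
      mul_left_comm _ (steinerForm _), ← Finset.mul_sum]
    rw [hPP'.circumconicForm_eq_zero_iff.mp hP, hPP'.symm.circumconicForm_eq_zero_iff.mp hP',
      mul_zero, sub_zero]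

lemma qval_generalizedOrthocenters_eq_zero {H' : Pt} {c : Fin 6 → ℝ}
    (hPP' : IsIsotomicPair (b.coords P) (b.coords P'))
    (hH : IsGeneralizedOrthocenter b P P' H) (hH' : IsGeneralizedOrthocenter b P' P H')
    (hb : ∀ i, qval c (b i) = 0) (hP : qval c P = 0) (hQ : qval c (complement b P') = 0) :
    qval c H = 0 ∧ qval c H' = 0 := by
  obtain ⟨α, hα⟩ := exists_circumconicForm_eq_qval b hb
  rw [hα] at hP hQ
  rw [coords_complement, circumconicForm_smul, mul_eq_zero, or_iff_right (by norm_num)] at hQ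
  have hP' := hPP'.circumconicForm_eq_zero_of_one_sub hP hQ
  rw [hα, hα]
  exact ⟨hH.circumconicForm_eq_zero hPP' hP hP', hH'.circumconicForm_eq_zero hPP'.symm hP' hP⟩

lemma isGeneralizedOrthocenter_of_traces {E F : Pt}
    (hD : Collinear ℝ {b 0, P, D} ∧ Collinear ℝ {b 1, b 2, D})
    (hE : Collinear ℝ {b 1, P, E} ∧ Collinear ℝ {b 0, b 2, E})
    (hF : Collinear ℝ {b 2, P, F} ∧ Collinear ℝ {b 0, b 1, F})
    (hH : Par (H - b 0) (D - complement b P') ∧ Par (H - b 1) (E - complement b P') ∧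
      Par (H - b 2) (F - complement b P')) :
    IsGeneralizedOrthocenter b P P' H := by
  intro i
  match i with
  | 0 => exact ⟨D, ⟨hD.1, hD.2⟩, hH.1⟩
  | 1 => exact ⟨E, ⟨hE.1, Set.insert_comm (b 0) (b 2) {E} ▸ hE.2⟩, hH.2.1⟩
  | 2 => exact ⟨F, ⟨hF.1, hF.2⟩, hH.2.2⟩

end Barycentric

theorem generalized_orthocenters_on_cevian_conic_general
    (A B C P P' Q Q' D E F D₃ E₃ F₃ : Pt) (x y z : ℝ)
    (hABC : AffineIndependent ℝ ![A, B, C])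
    (hsum : x + y + z = 1)
    (hPco : P = x • A + y • B + z • C)
    (hx0 : x ≠ 0) (hy0 : y ≠ 0) (hz0 : z ≠ 0)
    (hst : x * y + y * z + z * x ≠ 0)
    (hP' : P' = (y * z / (x * y + y * z + z * x)) • A
        + (x * z / (x * y + y * z + z * x)) • B
        + (x * y / (x * y + y * z + z * x)) • C)
    (hQ : Q = homoth (cent A B C) (-(1 / 2)) P')
    (hQ' : Q' = homoth (cent A B C) (-(1 / 2)) P)
    (hD : Collinear ℝ {A, P, D} ∧ Collinear ℝ {B, C, D})
    (hE : Collinear ℝ {B, P, E} ∧ Collinear ℝ {A, C, E})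
    (hF : Collinear ℝ {C, P, F} ∧ Collinear ℝ {A, B, F})
    (hD₃ : Collinear ℝ {A, P', D₃} ∧ Collinear ℝ {B, C, D₃})
    (hE₃ : Collinear ℝ {B, P', E₃} ∧ Collinear ℝ {A, C, E₃})
    (hF₃ : Collinear ℝ {C, P', F₃} ∧ Collinear ℝ {A, B, F₃})
    (H H' : Pt)
    (hH : Par (H - A) (D - Q) ∧ Par (H - B) (E - Q) ∧ Par (H - C) (F - Q))
    (hH' : Par (H' - A) (D₃ - Q') ∧ Par (H' - B) (E₃ - Q') ∧ Par (H' - C) (F₃ - Q'))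
    (CP : Set Pt) (hCPc : IsConic CP) (hACP : A ∈ CP) (hBCP : B ∈ CP) (hCCP : C ∈ CP)
    (hPCP : P ∈ CP) (hQCP : Q ∈ CP) :
    H ∈ CP ∧ H' ∈ CP := by
  obtain ⟨b, rfl, rfl, rfl⟩ := exists_affineBasis_of_affineIndependent hABC
  obtain ⟨c, -, rfl⟩ := hCPc
  have hxx' := isIsotomicPair_div_of_sum_eq_one hsum hx0 hy0 hz0 rfl hst
  have hPP' : IsIsotomicPair (b.coords P) (b.coords P') := by
    have hPcoords := coords_sum_smul b hxx'.sum_eq_one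
    have hP'coords := coords_sum_smul b hxx'.sum_eq_one'
    rw [Fin.sum_univ_three] at hPcoords hP'coords
    rw [hPco, hP']
    exact hPcoords.symm ▸ hP'coords.symm ▸ hxx'
  subst hQ hQ'
  exact qval_generalizedOrthocenters_eq_zero hPP'
    (isGeneralizedOrthocenter_of_traces hD hE hF hH)
    (isGeneralizedOrthocenter_of_traces hD₃ hE₃ hF₃ hH')
    (Fin.forall_fin_succ.mpr ⟨hACP, Fin.forall_fin_two.mpr ⟨hBCP, hCCP⟩⟩) hPCP hQCP

theorem generalized_orthocenters_on_cevian_conic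
    (A B C P P' Q Q' D E F D₃ E₃ F₃ : Pt) (x y z : ℝ)
    (hABC : AffineIndependent ℝ ![A, B, C])
    (hsum : x + y + z = 1)
    (hPco : P = x • A + y • B + z • C)
    (hx0 : x ≠ 0) (hy0 : y ≠ 0) (hz0 : z ≠ 0)
    (hx1 : x ≠ 1) (hy1 : y ≠ 1) (hz1 : z ≠ 1)
    (hst : x * y + y * z + z * x ≠ 0)
    (hP' : P' = (y * z / (x * y + y * z + z * x)) • A
        + (x * z / (x * y + y * z + z * x)) • B
        + (x * y / (x * y + y * z + z * x)) • C)
    (hQ : Q = homoth (cent A B C) (-(1 / 2)) P')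
    (hQ' : Q' = homoth (cent A B C) (-(1 / 2)) P)
    (hD : Collinear ℝ {A, P, D} ∧ Collinear ℝ {B, C, D})
    (hE : Collinear ℝ {B, P, E} ∧ Collinear ℝ {A, C, E})
    (hF : Collinear ℝ {C, P, F} ∧ Collinear ℝ {A, B, F})
    (hD₃ : Collinear ℝ {A, P', D₃} ∧ Collinear ℝ {B, C, D₃})
    (hE₃ : Collinear ℝ {B, P', E₃} ∧ Collinear ℝ {A, C, E₃})
    (hF₃ : Collinear ℝ {C, P', F₃} ∧ Collinear ℝ {A, B, F₃})
    (hxy : x ≠ y) (hyz : y ≠ z) (hxz : x ≠ z)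
    (O H : Pt)
    (hO : Par (midpoint ℝ B C - O) (D - Q) ∧ Par (midpoint ℝ C A - O) (E - Q) ∧
          Par (midpoint ℝ A B - O) (F - Q))
    (hH : Par (H - A) (D - Q) ∧ Par (H - B) (E - Q) ∧ Par (H - C) (F - Q))
    (O' H' : Pt)
    (hO' : Par (midpoint ℝ B C - O') (D₃ - Q') ∧ Par (midpoint ℝ C A - O') (E₃ - Q') ∧
           Par (midpoint ℝ A B - O') (F₃ - Q'))
    (hH' : Par (H' - A) (D₃ - Q') ∧ Par (H' - B) (E₃ - Q') ∧ Par (H' - C) (F₃ - Q'))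
    (CP : Set Pt) (Z : Pt)
    (hCPc : IsConic CP) (hACP : A ∈ CP) (hBCP : B ∈ CP) (hCCP : C ∈ CP)
    (hPCP : P ∈ CP) (hQCP : Q ∈ CP)
    (hCPuniq : ∀ S : Set Pt, IsConic S → A ∈ S → B ∈ S → C ∈ S → P ∈ S → Q ∈ S → S = CP)
    (hZ : IsCenterOf Z CP) (hZuniq : ∀ W : Pt, IsCenterOf W CP → W = Z) :
    H ∈ CP ∧ H' ∈ CP :=
  generalized_orthocenters_on_cevian_conic_general A B C P P' Q Q' D E F D₃ E₃ F₃ x y z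
    hABC hsum hPco hx0 hy0 hz0 hst hP' hQ hQ' hD hE hF hD₃ hE₃ hF₃ H H' hH hH' CP
    hCPc hACP hBCP hCCP hPCP hQCP
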